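/- For every integer n ≥ 2, D_±(C_4 ⊕ C_{4n}) = ⌊log₂(16n)⌋ + 1. -/

import Mathlib

open Finset

/-- A sequence `g` over `G` has an `A`-weighted zero-subsum: there is a nonempty
index set `I` and weights `a i ∈ A` for `i ∈ I` with `∑ i ∈ I, a i • g i = 0`. -/
def HasWZS (A : Set ℤ) {G : Type*} [AddCommGroup G] {ℓ : ℕ} (g : Fin ℓ → G) : Prop :=
  ∃ (I : Finset (Fin ℓ)) (a : Fin ℓ → ℤ), I.Nonempty ∧ (∀ i ∈ I, a i ∈ A) ∧
    ∑ i ∈ I, a i • g i = 0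

/-- The `A`-weighted Davenport constant of `G`: the smallest `ℓ` such that every
sequence of length `ℓ` over `G` has an `A`-weighted zero-subsum. -/
noncomputable def DavW (A : Set ℤ) (G : Type*) [AddCommGroup G] : ℕ :=
  sInf {ℓ : ℕ | ∀ g : Fin ℓ → G, HasWZS A g}

/-- The plus-minus weighted Davenport constant. -/
noncomputable def Davpm (G : Type*) [AddCommGroup G] : ℕ :=
  DavW ({1, -1} : Set ℤ) G

theorem aux_digits (e : ℕ → ℤ) (he : ∀ i, e i = 0 ∨ e i = 1 ∨ e i = -1) (m : ℕ) :
    |∑ i ∈ Finset.range m, e i * 2 ^ i| < 2 ^ m ∧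
      ((∑ i ∈ Finset.range m, e i * 2 ^ i) = 0 → ∀ i < m, e i = 0) := by
  induction m with
  | zero => simp
  | succ m ih =>
    obtain ⟨h1, h2⟩ := ih
    rw [Finset.sum_range_succ, pow_succ]
    rw [abs_lt] at h1 ⊢
    rcases he m with h | h | h
    · rw [h]
      refine ⟨⟨by linarith, by linarith⟩, fun h0 i hi => ?_⟩
      rcases Nat.lt_succ_iff_lt_or_eq.mp hi with h' | rfl
      · exact h2 (by linarith) i h'
      · exact h
    · rw [h]
      exact ⟨⟨by linarith, by linarith⟩, fun h0 => by exfalso; linarith⟩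
    · rw [h]
      exact ⟨⟨by linarith, by linarith⟩, fun h0 => by exfalso; linarith⟩

theorem aux_mod (e : ℕ → ℤ) (he : ∀ i, e i = 0 ∨ e i = 1 ∨ e i = -1) (m N : ℕ)
    (hN : 2 ^ m ≤ N) (h : ∑ i ∈ Finset.range m, e i • ((2 : ZMod N) ^ i) = 0) :
    ∀ i < m, e i = 0 := by
  obtain ⟨h1, h2⟩ := aux_digits e he m
  apply h2
  have h3 : ((∑ i ∈ Finset.range m, e i * 2 ^ i : ℤ) : ZMod N) = 0 := by
    rw [← h]; push_cast; simp [zsmul_eq_mul]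
  rw [ZMod.intCast_zmod_eq_zero_iff_dvd] at h3
  apply Int.eq_zero_of_abs_lt_dvd h3
  have : ((2 : ℤ) ^ m) ≤ N := by exact_mod_cast hN
  linarith

theorem aux_upper {G : Type*} [AddCommGroup G] [Fintype G] (l : ℕ)
    (hl : Fintype.card G < 2 ^ l) (g : Fin l → G) : HasWZS ({1, -1} : Set ℤ) g := by
  classical
  obtain ⟨S, T, hne, hST⟩ := Fintype.exists_ne_map_eq_of_card_lt
    (fun S : Finset (Fin l) => ∑ i ∈ S, g i) (by simpa using hl)
  refine ⟨(S \ T) ∪ (T \ S), fun i => if i ∈ S then 1 else -1, ?_, ?_, ?_⟩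
  · rw [Finset.nonempty_iff_ne_empty]
    intro h
    apply hne
    rw [Finset.union_eq_empty, Finset.sdiff_eq_empty_iff_subset,
      Finset.sdiff_eq_empty_iff_subset] at h
    exact Finset.Subset.antisymm h.1 h.2
  · intro i _
    by_cases h : i ∈ S <;> simp [h]
  · rw [Finset.sum_union disjoint_sdiff_sdiff]
    have e1 : ∑ i ∈ S \ T, (if i ∈ S then (1 : ℤ) else -1) • g i = ∑ i ∈ S \ T, g i :=
      Finset.sum_congr rfl fun i hi => by simp [(Finset.mem_sdiff.mp hi).1]
    have e2 : ∑ i ∈ T \ S, (if i ∈ S then (1 : ℤ) else -1) • g i = - ∑ i ∈ T \ S, g i := by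
      rw [← Finset.sum_neg_distrib]
      exact Finset.sum_congr rfl fun i hi => by simp [(Finset.mem_sdiff.mp hi).2]
    rw [e1, e2, ← sub_eq_add_neg, Finset.sum_sdiff_sub_sum_sdiff]
    exact sub_eq_zero.mpr hST

theorem aux_lower (n m l : ℕ) (hm : 2 ^ m ≤ 4 * n) (hl : l ≤ m + 2) :
    ∃ g : Fin l → ZMod 4 × ZMod (4 * n), ¬ HasWZS ({1, -1} : Set ℤ) g := by
  classical
  let f : ℕ → ZMod 4 × ZMod (4 * n) := fun i => if i < m then (0, 2 ^ i) else (2 ^ (i - m), 0)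
  refine ⟨fun i => f i, ?_⟩
  rintro ⟨I, a, ⟨j, hj⟩, ha, hs⟩
  let e : ℕ → ℤ := fun i => if h : i < l then (if (⟨i, h⟩ : Fin l) ∈ I then a ⟨i, h⟩ else 0) else 0
  have he : ∀ i, e i = 0 ∨ e i = 1 ∨ e i = -1 := by
    intro i
    simp only [e]
    split_ifs with h h'
    · exact Or.inr (by simpa using ha _ h')
    · simp
    · simp
  have hej : e j ≠ 0 := by
    have : e j = a j := by simp [e, hj]
    rw [this]
    rcases ha j hj with h | h <;> simp_all
  have h1 : ∑ i ∈ Finset.range (m + 2), e i • f i = 0 := by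
    rw [← Finset.sum_subset (Finset.range_subset_range.mpr hl), Finset.sum_range, ← hs]
    · rw [← Finset.sum_subset (Finset.subset_univ I)]
      · exact Finset.sum_congr rfl fun i hi => by simp [e, hi]
      · intro i _ hi
        simp [e, hi]
    · intro i _ hi
      have : ¬ i < l := by simpa using hi
      simp [e, this]
  rw [Finset.sum_range_add] at h1
  have h2 : ∑ i ∈ Finset.range m, e i • f i
      = (0, ∑ i ∈ Finset.range m, e i • ((2 : ZMod (4 * n)) ^ i)) := by
    ext
    · rw [Prod.fst_sum]
      exact Finset.sum_eq_zero fun i hi => by simp [f, Finset.mem_range.mp hi]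
    · rw [Prod.snd_sum]
      exact Finset.sum_congr rfl fun i hi => by simp [f, Finset.mem_range.mp hi]
  have h3 : ∑ i ∈ Finset.range 2, e (m + i) • f (m + i)
      = (∑ i ∈ Finset.range 2, e (m + i) • ((2 : ZMod 4) ^ i), 0) := by
    ext
    · rw [Prod.fst_sum]
      change _ = ∑ i ∈ Finset.range 2, e (m + i) • ((2 : ZMod 4) ^ i)
      exact Finset.sum_congr rfl fun i hi => by simp [f]
    · rw [Prod.snd_sum]
      exact Finset.sum_eq_zero fun i hi => by simp [f]
  rw [h2, h3, Prod.mk_add_mk, zero_add, add_zero, Prod.mk_eq_zero] at h1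
  have k1 := aux_mod e he m (4 * n) hm h1.2
  have k2 := aux_mod (fun i => e (m + i)) (fun i => he _) 2 4 (by norm_num) h1.1
  apply hej
  rcases lt_or_ge (j : ℕ) m with h | h
  · exact k1 _ h
  · have := k2 (j - m) (by have := j.2; omega)
    simpa [Nat.add_sub_cancel' h] using this

theorem stmt17 (n : ℕ) (hn : 2 ≤ n) :
    (Davpm (ZMod 4 × ZMod (4 * n)) : ℤ) = ⌊Real.logb 2 (16 * (n : ℝ))⌋ + 1 := by
  have : NeZero (4 * n) := ⟨by omega⟩
  have hfl : ⌊Real.logb 2 (16 * (n : ℝ))⌋ = (Nat.log 2 (16 * n) : ℤ) := by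
    have := Real.floor_logb_natCast (b := 2) (r := 16 * (n : ℝ)) (by positivity)
    have h2 : Int.log 2 ((16 * n : ℕ) : ℝ) = Nat.log 2 (16 * n) := Int.log_natCast _ _
    push_cast at this h2
    rw [this, h2]
  rw [hfl]
  have hlo : 2 ^ Nat.log 2 (16 * n) ≤ 16 * n := Nat.pow_log_le_self 2 (by omega)
  have hhi : 16 * n < 2 ^ (Nat.log 2 (16 * n) + 1) := Nat.lt_pow_succ_log_self (by norm_num) _
  have hK : 2 ≤ Nat.log 2 (16 * n) := Nat.le_log_of_pow_le (by norm_num) (by omega)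
  obtain ⟨m, hm⟩ := Nat.exists_eq_add_of_le' hK
  rw [hm] at hlo hhi ⊢
  have hmem : (m + 2 + 1) ∈ {l : ℕ | ∀ g : Fin l → ZMod 4 × ZMod (4 * n),
      HasWZS ({1, -1} : Set ℤ) g} := by
    intro g
    apply aux_upper
    rw [Fintype.card_prod, ZMod.card, ZMod.card]
    omega
  have : Davpm (ZMod 4 × ZMod (4 * n)) = m + 2 + 1 := by
    unfold Davpm DavW
    apply le_antisymm (Nat.sInf_le hmem)
    apply le_csInf ⟨_, hmem⟩
    intro l hl
    by_contra hlt
    obtain ⟨g, hg⟩ := aux_lower n m l (by rw [pow_add] at hlo; omega) (by omega)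
    exact hg (hl g)
  rw [this]
  push_cast
  ring
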